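/- arXiv:math/0506436 — 6 statements merged into one kernel-verified Lean document; each statement's English description precedes it below -/
import Mathlib

section
/- Let X ⊆ ℝⁿ be open, M = {x ∈ X : x' = 0}, and let Λ be a closed conic subset of X × ℝⁿ. Then j_d j_π^{−1}(Λ +̂ T*_M X) = j^#(Λ); that is, a pair (x''₀; ξ''₀) with (0,x''₀) ∈ M admits some ξ'₀ ∈ ℝ^d with (0, x''₀; ξ'₀, ξ''₀) ∈ Λ +̂ T*_M X if and only if there exists a sequence (x'ₙ, x''ₙ; ξ'ₙ, ξ''ₙ) in Λ with (x''ₙ; ξ''ₙ) → (x''₀; ξ''₀), x'ₙ → 0 and |x'ₙ| |(ξ'ₙ, ξ''ₙ)| → 0. (Lemma 3.2 of the paper, with both sides written via their sequence descriptions.) -/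
open Filter Topology

/-- ℝⁿ split as ℝ^d × ℝ^{n-d}, with coordinates `x = (x', x'')`. -/
abbrev Pt (d e : ℕ) : Type := EuclideanSpace ℝ (Fin d) × EuclideanSpace ℝ (Fin e)

/-- The operation `A +̂ B` on closed conic subsets of `T*X = X × ℝⁿ`:
`(x₀; ξ₀) ∈ X × ℝⁿ` belongs to `A +̂ B` iff there are sequences `(xₙ; ξₙ)` in `A` and
`(yₙ; ηₙ)` in `B` with `xₙ → x₀`, `yₙ → x₀`, `ξₙ + ηₙ → ξ₀` and `|xₙ - yₙ| |ξₙ| → 0`. -/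
def hatSum {V : Type*} [NormedAddCommGroup V] (X : Set V) (A B : Set (V × V)) :
    Set (V × V) :=
  {p | p.1 ∈ X ∧ ∃ x ξ y η : ℕ → V,
    (∀ n, (x n, ξ n) ∈ A) ∧ (∀ n, (y n, η n) ∈ B) ∧
    Tendsto x atTop (nhds p.1) ∧ Tendsto y atTop (nhds p.1) ∧
    Tendsto (fun n => ξ n + η n) atTop (nhds p.2) ∧
    Tendsto (fun n => ‖x n - y n‖ * ‖ξ n‖) atTop (nhds (0 : ℝ))}

/-- A subset of `X × ℝⁿ` is conic: stable under positive scalings of the covector. -/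
def IsConic {V : Type*} [NormedAddCommGroup V] [NormedSpace ℝ V] (A : Set (V × V)) : Prop :=
  ∀ p ∈ A, ∀ lam : ℝ, 0 < lam → (p.1, lam • p.2) ∈ A

/-- `T*_M X = {(0, x''; ξ', 0) : (0, x'') ∈ X, ξ' ∈ ℝ^d}` where `M = {x ∈ X : x' = 0}`. -/
def conormalM {d e : ℕ} (X : Set (Pt d e)) : Set (Pt d e × Pt d e) :=
  {p | p.1.1 = 0 ∧ p.1 ∈ X ∧ p.2.2 = 0}

/-- `j^#(Λ)`: the set of `(x''₀; ξ''₀)` with `(0, x''₀) ∈ M` for which there is a sequence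
`(x'ₙ, x''ₙ; ξ'ₙ, ξ''ₙ)` in `Λ` with `(x''ₙ; ξ''ₙ) → (x''₀; ξ''₀)`, `x'ₙ → 0` and
`|x'ₙ| |(ξ'ₙ, ξ''ₙ)| → 0`. -/
def jSharp {d e : ℕ} (X : Set (Pt d e)) (Λ : Set (Pt d e × Pt d e)) :
    Set (EuclideanSpace ℝ (Fin e) × EuclideanSpace ℝ (Fin e)) :=
  {q | ((0 : EuclideanSpace ℝ (Fin d)), q.1) ∈ X ∧
    ∃ (x' : ℕ → EuclideanSpace ℝ (Fin d)) (x'' : ℕ → EuclideanSpace ℝ (Fin e))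
      (ξ' : ℕ → EuclideanSpace ℝ (Fin d)) (ξ'' : ℕ → EuclideanSpace ℝ (Fin e)),
      (∀ n, ((x' n, x'' n), (ξ' n, ξ'' n)) ∈ Λ) ∧
      Tendsto (fun n => (x'' n, ξ'' n)) atTop (nhds q) ∧
      Tendsto x' atTop (nhds (0 : EuclideanSpace ℝ (Fin d))) ∧
      Tendsto (fun n => ‖x' n‖ * ‖((ξ' n, ξ'' n) : Pt d e)‖) atTop (nhds (0 : ℝ))}

/-- `j_d j_π^{-1}(A) = {(x''; ξ'') : (0, x'') ∈ M, ∃ ξ', (0, x''; ξ', ξ'') ∈ A}`. -/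
def jdjpi {d e : ℕ} (X : Set (Pt d e)) (A : Set (Pt d e × Pt d e)) :
    Set (EuclideanSpace ℝ (Fin e) × EuclideanSpace ℝ (Fin e)) :=
  {q | ((0 : EuclideanSpace ℝ (Fin d)), q.1) ∈ X ∧
    ∃ ξ' : EuclideanSpace ℝ (Fin d),
      (((0 : EuclideanSpace ℝ (Fin d)), q.1), (ξ', q.2)) ∈ A}

/-- **Lemma 3.2.** For a closed conic subset `Λ` of `X × ℝⁿ`,
`j_d j_π^{-1}(Λ +̂ T*_M X) = j^#(Λ)`. -/
theorem stmt0 {d e : ℕ} (hd : 1 ≤ d) (he : 1 ≤ e)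
    (X : Set (Pt d e)) (hX : IsOpen X)
    (Λ : Set (Pt d e × Pt d e))
    (hΛX : ∀ p ∈ Λ, p.1 ∈ X)
    (hΛclosed : closure Λ ∩ {p : Pt d e × Pt d e | p.1 ∈ X} ⊆ Λ)
    (hΛconic : IsConic Λ) :
    jdjpi X (hatSum X Λ (conormalM X)) = jSharp X Λ := by
  ext q
  constructor
  · rintro ⟨hq, ζ, -, x, ξ, y, η, hA, hB, hx, hy, hs, hp⟩
    refine ⟨hq, fun n => (x n).1, fun n => (x n).2, fun n => (ξ n).1, fun n => (ξ n).2,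
      hA, ?_, ?_, ?_⟩
    · have h1 : Tendsto (fun n => (x n).2) atTop (nhds q.1) :=
        (continuous_snd.tendsto _).comp hx
      have h2 : Tendsto (fun n => (ξ n + η n).2) atTop (nhds q.2) :=
        (continuous_snd.tendsto _).comp hs
      have h3 : (fun n => (ξ n + η n).2) = fun n => (ξ n).2 := by
        funext n
        have := (hB n).2.2
        simp only at this
        simp [this]
      rw [h3] at h2
      exact h1.prodMk_nhds h2
    · exact (continuous_fst.tendsto _).comp hx
    · refine squeeze_zero (fun n => by positivity) (fun n => ?_) hp
      have h0 : (y n).1 = 0 := (hB n).1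
      have h1 : ‖(x n).1‖ ≤ ‖x n - y n‖ := by
        have := norm_fst_le (x n - y n)
        simpa [h0] using this
      exact mul_le_mul_of_nonneg_right h1 (norm_nonneg _)
  · rintro ⟨hq, x', x'', ξ', ξ'', hA, ht, hx, hp⟩
    have h1 : Tendsto x'' atTop (nhds q.1) := (continuous_fst.tendsto _).comp ht
    have h2 : Tendsto ξ'' atTop (nhds q.2) := (continuous_snd.tendsto _).comp ht
    have hy : Tendsto (fun n => ((0 : EuclideanSpace ℝ (Fin d)), x'' n)) atTop
        (nhds (0, q.1)) := tendsto_const_nhds.prodMk_nhds h1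
    obtain ⟨N, hN⟩ := eventually_atTop.1 (hy.eventually (hX.mem_nhds hq))
    have hsh : Tendsto (fun n : ℕ => n + N) atTop atTop := tendsto_add_atTop_nat N
    refine ⟨hq, 0, hq, fun n => (x' (n + N), x'' (n + N)),
      fun n => (ξ' (n + N), ξ'' (n + N)), fun n => (0, x'' (n + N)),
      fun n => (-ξ' (n + N), 0), fun n => hA _, fun n => ⟨rfl, hN _ (by omega), rfl⟩,
      (hx.prodMk_nhds h1).comp hsh, hy.comp hsh, ?_, ?_⟩
    · have : Tendsto (fun n => ((0 : EuclideanSpace ℝ (Fin d)), ξ'' n)) atTop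
        (nhds (0, q.2)) := tendsto_const_nhds.prodMk_nhds h2
      simpa [Function.comp_def] using this.comp hsh
    · refine (hp.comp hsh).congr fun n => ?_
      simp [Prod.norm_def]
end

section
/- Let X ⊆ ℝⁿ be open, M = {x ∈ X : x' = 0}, and let Λ be a conic subset of X × ℝⁿ. Then j^#(Λ) coincides with the normal-cone description of T*M ∩ C_{T*_M X}(Λ): a pair (x''₀; ξ''₀) with (0,x''₀) ∈ M belongs to j^#(Λ) if and only if there exist a sequence of positive real numbers (cₙ) and a sequence (x'ₙ, x''ₙ; ξ'ₙ, ξ''ₙ) in Λ such that (x'ₙ, x''ₙ; ξ'ₙ, ξ''ₙ) → (0, x''₀; ξ'₀, 0) for some ξ'₀ ∈ ℝ^d, cₙ·x'ₙ → 0, and cₙ·ξ''ₙ → ξ''₀. -/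
open Filter Topology

/-- The coordinate description of `T*M ∩ C_{T*_M X}(Λ)`: the set of `(x''₀; ξ''₀)` with
`(0, x''₀) ∈ M` for which there are a sequence of positive reals `(cₙ)` and a sequence
`(x'ₙ, x''ₙ; ξ'ₙ, ξ''ₙ)` in `Λ` converging to `(0, x''₀; ξ'₀, 0)` for some `ξ'₀`, with
`cₙ • x'ₙ → 0` and `cₙ • ξ''ₙ → ξ''₀`. -/
def normalConeDesc {d e : ℕ} (X : Set (Pt d e)) (Λ : Set (Pt d e × Pt d e)) :
    Set (EuclideanSpace ℝ (Fin e) × EuclideanSpace ℝ (Fin e)) :=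
  {q | ((0 : EuclideanSpace ℝ (Fin d)), q.1) ∈ X ∧
    ∃ (c : ℕ → ℝ) (x' : ℕ → EuclideanSpace ℝ (Fin d)) (x'' : ℕ → EuclideanSpace ℝ (Fin e))
      (ξ' : ℕ → EuclideanSpace ℝ (Fin d)) (ξ'' : ℕ → EuclideanSpace ℝ (Fin e))
      (ξ'₀ : EuclideanSpace ℝ (Fin d)),
      (∀ n, 0 < c n) ∧
      (∀ n, ((x' n, x'' n), (ξ' n, ξ'' n)) ∈ Λ) ∧
      Tendsto (fun n => ((x' n, x'' n), (ξ' n, ξ'' n)))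
        atTop (nhds (((0 : EuclideanSpace ℝ (Fin d)), q.1),
          (ξ'₀, (0 : EuclideanSpace ℝ (Fin e))))) ∧
      Tendsto (fun n => c n • x' n) atTop (nhds (0 : EuclideanSpace ℝ (Fin d))) ∧
      Tendsto (fun n => c n • ξ'' n) atTop (nhds q.2)}

theorem aux_c (r s : ℕ → ℝ) (hr0 : ∀ n, 0 ≤ r n) (hs0 : ∀ n, 0 ≤ s n)
    (hr : Tendsto r atTop (nhds 0)) (hrs : Tendsto (fun n => r n * s n) atTop (nhds 0)) :
    ∃ c : ℕ → ℝ, (∀ n, 0 < c n) ∧ Tendsto (fun n => c n * r n) atTop (nhds 0) ∧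
      Tendsto (fun n => (c n)⁻¹ * s n) atTop (nhds 0) := by
  have hε : ∀ n : ℕ, 0 < 1 / (((n : ℝ) + 1) * (s n + 1)) := fun n => by
    have := hs0 n
    positivity
  have hA : ∀ n : ℕ, 0 < (s n + 1) / (r n + 1 / (((n : ℝ) + 1) * (s n + 1))) := fun n => by
    have := hs0 n
    have := hr0 n
    have := hε n
    positivity
  refine ⟨fun n => √((s n + 1) / (r n + 1 / (((n : ℝ) + 1) * (s n + 1)))),
    fun n => Real.sqrt_pos.2 (hA n), ?_, ?_⟩
  · have h1 : Tendsto (fun n => √(r n * s n + r n)) atTop (nhds 0) := by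
      simpa using (hrs.add hr).sqrt
    refine squeeze_zero (fun n => mul_nonneg (Real.sqrt_nonneg _) (hr0 n)) (fun n => ?_) h1
    apply Real.le_sqrt_of_sq_le
    rw [mul_pow, Real.sq_sqrt (hA n).le]
    have h2 := hs0 n
    have h3 := hr0 n
    have h4 := hε n
    generalize 1 / (((n : ℝ) + 1) * (s n + 1)) = ε at *
    rw [div_mul_eq_mul_div, div_le_iff₀ (by positivity)]
    have : 0 ≤ (s n + 1) * r n * ε := by positivity
    nlinarith
  · have h1 : Tendsto (fun n : ℕ => √(r n * s n + 1 / ((n : ℝ) + 1))) atTop (nhds 0) := by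
      simpa using (hrs.add tendsto_one_div_add_atTop_nhds_zero_nat).sqrt
    refine squeeze_zero (fun n => mul_nonneg (inv_nonneg.2 (Real.sqrt_nonneg _)) (hs0 n))
      (fun n => ?_) h1
    apply Real.le_sqrt_of_sq_le
    rw [mul_pow, inv_pow, Real.sq_sqrt (hA n).le, inv_div]
    have h2 := hs0 n
    have h3 := hr0 n
    have h4 := hε n
    have h5 : 1 / ((n : ℝ) + 1) = 1 / (((n : ℝ) + 1) * (s n + 1)) * (s n + 1) := by
      field_simp
    rw [h5]
    generalize 1 / (((n : ℝ) + 1) * (s n + 1)) = ε at *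
    rw [div_mul_eq_mul_div, div_le_iff₀ (by positivity)]
    have e1 : 0 ≤ s n * r n := by positivity
    have e2 : 0 ≤ s n * ε := by positivity
    nlinarith

/-- For a conic subset `Λ` of `X × ℝⁿ`, `j^#(Λ)` coincides with the normal-cone description
of `T*M ∩ C_{T*_M X}(Λ)`. -/
theorem stmt1 {d e : ℕ} (hd : 1 ≤ d) (he : 1 ≤ e)
    (X : Set (Pt d e)) (hX : IsOpen X)
    (Λ : Set (Pt d e × Pt d e))
    (hΛX : ∀ p ∈ Λ, p.1 ∈ X)
    (hΛconic : IsConic Λ) :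
    jSharp X Λ = normalConeDesc X Λ := by
  ext q
  constructor
  · rintro ⟨hq, x', x'', ξ', ξ'', hmem, hlim, hx', hprod⟩
    refine ⟨hq, ?_⟩
    obtain ⟨c, hc, hcr, hcs⟩ := aux_c (fun n => ‖x' n‖)
      (fun n => ‖((ξ' n, ξ'' n) : Pt d e)‖) (fun n => norm_nonneg _) (fun n => norm_nonneg _)
      (tendsto_zero_iff_norm_tendsto_zero.1 hx') hprod
    have hz : Tendsto (fun n => (c n)⁻¹ • ((ξ' n, ξ'' n) : Pt d e)) atTop (nhds 0) := by
      rw [tendsto_zero_iff_norm_tendsto_zero]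
      refine hcs.congr fun n => ?_
      rw [norm_smul, Real.norm_of_nonneg (inv_nonneg.2 (hc n).le)]
    refine ⟨c, x', x'', fun n => (c n)⁻¹ • ξ' n, fun n => (c n)⁻¹ • ξ'' n, 0, hc,
      fun n => hΛconic _ (hmem n) _ (inv_pos.2 (hc n)), ?_, ?_, ?_⟩
    · exact (hx'.prodMk_nhds ((continuous_fst.tendsto q).comp hlim)).prodMk_nhds hz
    · rw [tendsto_zero_iff_norm_tendsto_zero]
      refine hcr.congr fun n => ?_
      rw [norm_smul, Real.norm_of_nonneg (hc n).le]
    · refine ((continuous_snd.tendsto q).comp hlim).congr fun n => ?_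
      simp [smul_smul, mul_inv_cancel₀ (hc n).ne']
  · rintro ⟨hq, c, x', x'', ξ', ξ'', ξ₀, hc, hmem, hlim, hcx, hcξ⟩
    have hx := (continuous_fst.tendsto _).comp hlim
    have hξ := (continuous_snd.tendsto _).comp hlim
    refine ⟨hq, x', x'', fun n => c n • ξ' n, fun n => c n • ξ'' n,
      fun n => hΛconic _ (hmem n) _ (hc n),
      ((continuous_snd.tendsto _).comp hx).prodMk_nhds hcξ,
      (continuous_fst.tendsto _).comp hx, ?_⟩
    have h := hcx.norm.mul hξ.norm
    rw [norm_zero, zero_mul] at h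
    refine h.congr fun n => ?_
    have : ((c n • ξ' n, c n • ξ'' n) : Pt d e) = c n • (ξ' n, ξ'' n) := rfl
    rw [this, norm_smul, norm_smul]
    simp only [Function.comp]
    ring
end

section
/- Let X ⊆ ℝⁿ be open, M = {x ∈ X : x' = 0}, and let Λ be a closed conic subset of X × ℝⁿ. Then (Λ +̂ T*_M X) +̂ T*_M X = Λ +̂ T*_M X. (Lemma 3.3 of the paper.) -/
open Filter Topology

theorem hat_fst_zero {d e : ℕ} {X : Set (Pt d e)} {A : Set (Pt d e × Pt d e)}
    {p : Pt d e × Pt d e} (h : p ∈ hatSum X A (conormalM X)) : p.1.1 = 0 := by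
  obtain ⟨_, x, ξ, y, η, hA, hB, hx, hy, hs, hm⟩ := h
  have h1 : Tendsto (fun n => (y n).1) atTop (nhds p.1.1) :=
    (continuous_fst.tendsto p.1).comp hy
  have h2 : (fun n => (y n).1) = fun _ => 0 := funext fun n => (hB n).1
  rw [h2] at h1
  exact tendsto_nhds_unique h1 tendsto_const_nhds

theorem hat_approx {d e : ℕ} {X : Set (Pt d e)} {A : Set (Pt d e × Pt d e)}
    {p : Pt d e × Pt d e} (h : p ∈ hatSum X A (conormalM X)) (ε : ℝ) (hε : 0 < ε) :
    ∃ q ∈ A, dist q.1 p.1 < ε ∧ dist q.2.2 p.2.2 < ε ∧ ‖q.1.1‖ * ‖q.2‖ < ε := by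
  obtain ⟨_, x, ξ, y, η, hA, hB, hx, hy, hs, hm⟩ := h
  have h1 : Tendsto (fun n => (ξ n + η n).2) atTop (nhds p.2.2) :=
    (continuous_snd.tendsto p.2).comp hs
  have e1 := (Metric.tendsto_nhds.1 hx) ε hε
  have e2 := (Metric.tendsto_nhds.1 h1) ε hε
  have e3 := hm.eventually (gt_mem_nhds hε)
  obtain ⟨n, a, b, c⟩ := (e1.and (e2.and e3)).exists
  refine ⟨_, hA n, a, ?_, ?_⟩
  · have : (η n).2 = 0 := (hB n).2.2
    simpa [this] using b
  · refine lt_of_le_of_lt ?_ c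
    have h0 : (y n).1 = 0 := (hB n).1
    have : ‖(x n - y n).1‖ ≤ ‖x n - y n‖ := norm_fst_le _
    rw [Prod.fst_sub, h0, sub_zero] at this
    exact mul_le_mul_of_nonneg_right this (norm_nonneg _)

theorem hat_of_approx {d e : ℕ} {X : Set (Pt d e)} (hX : IsOpen X)
    {A : Set (Pt d e × Pt d e)}
    {p : Pt d e × Pt d e} (hp : p.1 ∈ X) (h0 : p.1.1 = 0)
    (h : ∀ ε : ℝ, 0 < ε →
      ∃ q ∈ A, dist q.1 p.1 < ε ∧ dist q.2.2 p.2.2 < ε ∧ ‖q.1.1‖ * ‖q.2‖ < ε) :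
    p ∈ hatSum X A (conormalM X) := by
  obtain ⟨δ, hδ, hball⟩ := Metric.isOpen_iff.1 hX _ hp
  have hpos : ∀ k : ℕ, 0 < min δ (1 / ((k : ℝ) + 1)) := fun k =>
    lt_min hδ Nat.one_div_pos_of_nat
  choose q hqA hq1 hq2 hq3 using fun k : ℕ => h _ (hpos k)
  have hlim : Tendsto (fun k : ℕ => 1 / ((k : ℝ) + 1)) atTop (nhds 0) :=
    tendsto_one_div_add_atTop_nhds_zero_nat
  have hd : ∀ k, dist ((0, (q k).1.2) : Pt d e) p.1 ≤ dist (q k).1 p.1 := by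
    intro k
    rw [Prod.dist_eq, Prod.dist_eq]
    simp [h0]
  have t1 : Tendsto (fun k => (q k).1) atTop (nhds p.1) := by
    rw [tendsto_iff_dist_tendsto_zero]
    exact squeeze_zero (fun _ => dist_nonneg)
      (fun k => (hq1 k).le.trans (min_le_right _ _)) hlim
  have t2 : Tendsto (fun k => (q k).2.2) atTop (nhds p.2.2) := by
    rw [tendsto_iff_dist_tendsto_zero]
    exact squeeze_zero (fun _ => dist_nonneg)
      (fun k => (hq2 k).le.trans (min_le_right _ _)) hlim
  refine ⟨hp, fun k => (q k).1, fun k => (q k).2, fun k => (0, (q k).1.2),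
    fun k => (p.2.1 - (q k).2.1, 0), hqA, ?_, t1, ?_, ?_, ?_⟩
  · intro k
    exact ⟨rfl, hball ((hd k).trans_lt ((hq1 k).trans_le (min_le_left _ _))), rfl⟩
  · rw [tendsto_iff_dist_tendsto_zero]
    exact squeeze_zero (fun _ => dist_nonneg)
      (fun k => (hd k).trans ((hq1 k).le.trans (min_le_right _ _))) hlim
  · have : (fun k => (q k).2 + ((p.2.1 - (q k).2.1, 0) : Pt d e))
        = fun k => (p.2.1, (q k).2.2) := by
      funext k
      ext1 <;> simp
    rw [this]
    exact (tendsto_const_nhds (x := p.2.1)).prodMk_nhds t2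
  · refine squeeze_zero (fun _ => by positivity) (fun k => ?_) hlim
    have : ‖(q k).1 - ((0, (q k).1.2) : Pt d e)‖ = ‖(q k).1.1‖ := by
      rw [Prod.norm_def]; simp
    rw [this]
    exact (hq3 k).le.trans (min_le_right _ _)

/-- **Lemma 3.3.** For a closed conic subset `Λ` of `X × ℝⁿ`,
`(Λ +̂ T*_M X) +̂ T*_M X = Λ +̂ T*_M X`. -/
theorem stmt2 {d e : ℕ} (hd : 1 ≤ d) (he : 1 ≤ e)
    (X : Set (Pt d e)) (hX : IsOpen X)
    (Λ : Set (Pt d e × Pt d e))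
    (hΛX : ∀ p ∈ Λ, p.1 ∈ X)
    (hΛclosed : closure Λ ∩ {p : Pt d e × Pt d e | p.1 ∈ X} ⊆ Λ)
    (hΛconic : IsConic Λ) :
    hatSum X (hatSum X Λ (conormalM X)) (conormalM X) = hatSum X Λ (conormalM X) := by
  apply Set.Subset.antisymm
  · intro p hp
    refine hat_of_approx hX hp.1 (hat_fst_zero hp) fun ε hε => ?_
    obtain ⟨q, hq, a1, a2, _⟩ := hat_approx hp (ε / 2) (half_pos hε)
    obtain ⟨r, hr, b1, b2, b3⟩ := hat_approx hq (ε / 2) (half_pos hε)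
    refine ⟨r, hr, ?_, ?_, by linarith⟩
    · linarith [dist_triangle r.1 q.1 p.1]
    · linarith [dist_triangle r.2.2 q.2.2 p.2.2]
  · intro p hp
    have h0 := hat_fst_zero hp
    exact hat_of_approx hX hp.1 h0 fun ε hε => ⟨p, hp, by simpa, by simpa, by simpa [h0]⟩
end

section
/- Let X ⊆ ℝⁿ be open, M = {x ∈ X : x' = 0}, and let Λ be a closed conic subset of X × ℝⁿ satisfying the non-characteristic condition Λ ∩ T*_M X ⊆ X × {0}. Then Λ +̂ T*_M X = Λ + T*_M X, where Λ + T*_M X = {(0, x''; ξ' + η', ξ'') : (0, x''; ξ', ξ'') ∈ Λ, η' ∈ ℝ^d}. -/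
open Filter Topology

/-- If `Λ` is a closed conic subset of `X × ℝⁿ` satisfying the non-characteristic condition
`Λ ∩ T*_M X ⊆ X × {0}`, then `Λ +̂ T*_M X = Λ + T*_M X`, where
`Λ + T*_M X = {(0, x''; ξ' + η', ξ'') : (0, x''; ξ', ξ'') ∈ Λ, η' ∈ ℝ^d}`. -/
theorem stmt7 {d e : ℕ} (hd : 1 ≤ d) (he : 1 ≤ e)
    (X : Set (Pt d e)) (hX : IsOpen X)
    (Λ : Set (Pt d e × Pt d e))
    (hΛX : ∀ p ∈ Λ, p.1 ∈ X)
    (hΛclosed : closure Λ ∩ {p : Pt d e × Pt d e | p.1 ∈ X} ⊆ Λ)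
    (hΛconic : IsConic Λ)
    (hnc : ∀ p ∈ Λ ∩ conormalM X, p.2 = 0) :
    hatSum X Λ (conormalM X)
      = {p : Pt d e × Pt d e | p.1.1 = 0 ∧
          ∃ ξ' η' : EuclideanSpace ℝ (Fin d),
            (p.1, ((ξ' : EuclideanSpace ℝ (Fin d)), p.2.2)) ∈ Λ ∧ p.2.1 = ξ' + η'} := by
  ext p
  constructor
  · rintro ⟨hpX, x, ξ, y, η, hA, hB, hx, hy, hs, -⟩
    have hp0 : p.1.1 = 0 := by
      have h1 : Tendsto (fun n => (y n).1) atTop (𝓝 p.1.1) := (continuous_fst.tendsto _).comp hy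
      have h2 : (fun n => (y n).1) = fun _ => 0 := funext fun n => (hB n).1
      rw [h2] at h1
      exact (tendsto_nhds_unique h1 tendsto_const_nhds)
    have hξ2 : Tendsto (fun n => (ξ n).2) atTop (𝓝 p.2.2) := by
      have h1 : Tendsto (fun n => (ξ n + η n).2) atTop (𝓝 p.2.2) :=
        (continuous_snd.tendsto _).comp hs
      refine h1.congr fun n => ?_
      have h3 : (η n).2 = 0 := (hB n).2.2
      simp [h3]
    have hlim : ∀ (φ : ℕ → ℕ) (ζ : ℕ → Pt d e) (a : Pt d e), StrictMono φ →
        (∀ n, (x (φ n), ζ n) ∈ Λ) → Tendsto ζ atTop (𝓝 a) → (p.1, a) ∈ Λ := by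
      intro φ ζ a hφ hm ha
      refine hΛclosed ⟨?_, hpX⟩
      exact mem_closure_of_tendsto ((hx.comp hφ.tendsto_atTop).prodMk_nhds ha)
        (Eventually.of_forall hm)
    refine ⟨hp0, ?_⟩
    by_cases hb : ∃ R : ℝ, ∃ᶠ n in atTop, ‖ξ n‖ ≤ R
    · obtain ⟨R, hR⟩ := hb
      obtain ⟨a, -, φ, hφ, ha⟩ := tendsto_subseq_of_frequently_bounded
        (Metric.isBounded_closedBall (x := (0 : Pt d e)) (r := R)) (x := ξ)
        (hR.mono fun n hn => by simpa using hn)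
      have hmem := hlim φ _ a hφ (fun n => hA (φ n)) ha
      have ha2 : a.2 = p.2.2 :=
        tendsto_nhds_unique ((continuous_snd.tendsto _).comp ha) (hξ2.comp hφ.tendsto_atTop)
      refine ⟨a.1, p.2.1 - a.1, ?_, by abel⟩
      rw [← ha2]
      exact hmem
    · exfalso
      have htop : Tendsto (fun n => ‖ξ n‖) atTop atTop := by
        refine tendsto_atTop.2 fun R => ?_
        by_contra hc
        exact hb ⟨R, (not_eventually.1 hc).mono fun n hn => (not_le.1 hn).le⟩
      obtain ⟨N, hN⟩ := eventually_atTop.1 (htop.eventually_gt_atTop 0)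
      have hnorm : ∀ n, N ≤ n → ‖‖ξ n‖⁻¹ • ξ n‖ = 1 := fun n hn => by
        rw [norm_smul, norm_inv, norm_norm, inv_mul_cancel₀ (hN n hn).ne']
      obtain ⟨a, ha1, φ, hφ, ha⟩ := (isCompact_sphere (0 : Pt d e) 1).tendsto_subseq
        (x := fun n => ‖ξ (n + N)‖⁻¹ • ξ (n + N))
        (fun n => by simpa only [mem_sphere_zero_iff_norm] using hnorm _ (Nat.le_add_left _ _))
      have hmem := hlim (fun n => φ n + N) _ a (fun i j h => Nat.add_lt_add_right (hφ h) N)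
        (fun n => hΛconic _ (hA (φ n + N)) _ (inv_pos.2 (hN _ (Nat.le_add_left _ _)))) ha
      have ha2 : a.2 = 0 := by
        have h1 : Tendsto (fun n => ‖ξ n‖⁻¹ • (ξ n).2) atTop (𝓝 ((0 : ℝ) • p.2.2)) :=
          (tendsto_inv_atTop_zero.comp htop).smul hξ2
        rw [zero_smul] at h1
        exact tendsto_nhds_unique ((continuous_snd.tendsto _).comp ha)
          ((h1.comp (tendsto_add_atTop_nat N)).comp hφ.tendsto_atTop)
      have h0 : a = 0 := hnc _ ⟨hmem, hp0, hpX, ha2⟩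
      rw [mem_sphere_zero_iff_norm, h0, norm_zero] at ha1
      exact zero_ne_one ha1
  · rintro ⟨hp0, ξ', η', hm, he'⟩
    have hpX : p.1 ∈ X := hΛX (p.1, (ξ', p.2.2)) hm
    refine ⟨hpX, fun _ => p.1, fun _ => (ξ', p.2.2), fun _ => p.1, fun _ => (η', 0),
      fun _ => hm, fun _ => ⟨hp0, hpX, rfl⟩, tendsto_const_nhds, tendsto_const_nhds, ?_, ?_⟩
    · have : ((ξ', p.2.2) + (η', 0) : Pt d e) = p.2 := by
        ext1 <;> simp [he']
      simp only [this]
      exact tendsto_const_nhds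
    · simp
end

section
/- Let X ⊆ ℝⁿ be open, M = {x ∈ X : x' = 0}, and let Λ be a closed conic subset of X × ℝⁿ satisfying the non-characteristic condition Λ ∩ T*_M X ⊆ X × {0}. Then j_d j_π^{−1}(Λ +̂ T*_M X) = j_d j_π^{−1}(Λ). -/
open Filter Topology

/-- If `Λ` is a closed conic subset of `X × ℝⁿ` satisfying the non-characteristic condition
`Λ ∩ T*_M X ⊆ X × {0}`, then `j_d j_π^{-1}(Λ +̂ T*_M X) = j_d j_π^{-1}(Λ)`. -/
theorem stmt8 {d e : ℕ} (hd : 1 ≤ d) (he : 1 ≤ e)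
    (X : Set (Pt d e)) (hX : IsOpen X)
    (Λ : Set (Pt d e × Pt d e))
    (hΛX : ∀ p ∈ Λ, p.1 ∈ X)
    (hΛclosed : closure Λ ∩ {p : Pt d e × Pt d e | p.1 ∈ X} ⊆ Λ)
    (hΛconic : IsConic Λ)
    (hnc : ∀ p ∈ Λ ∩ conormalM X, p.2 = 0) :
    jdjpi X (hatSum X Λ (conormalM X)) = jdjpi X Λ := by
  ext ⟨a, b⟩
  constructor
  · rintro ⟨haX, ξ', -, x, ξ, y, η, hA, hB, hx, hy, hs, -⟩
    refine ⟨haX, ?_⟩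
    simp only at haX hx hy hs ⊢
    have hs2 : Tendsto (fun n => (ξ n).2) atTop (𝓝 b) := by
      have h := (continuous_snd.tendsto _).comp hs
      refine h.congr fun n => ?_
      have := (hB n).2.2
      simp only at this
      simp [this]
    by_cases ht : Tendsto (fun n => ‖ξ n‖) atTop atTop
    · exfalso
      have hbd : ∀ n, ‖ξ n‖⁻¹ • ξ n ∈ Metric.closedBall (0 : Pt d e) 1 := by
        intro n
        rw [mem_closedBall_zero_iff, norm_smul, norm_inv, norm_norm]
        exact inv_mul_le_one
      obtain ⟨z, -, φ, hφ, hz⟩ := tendsto_subseq_of_bounded Metric.isBounded_closedBall hbd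
      have hpos : ∀ᶠ n in atTop, 0 < ‖ξ (φ n)‖ :=
        (ht.comp hφ.tendsto_atTop).eventually_gt_atTop 0
      have hmem : ∀ᶠ n in atTop, (x (φ n), ‖ξ (φ n)‖⁻¹ • ξ (φ n)) ∈ Λ := by
        filter_upwards [hpos] with n hn
        exact hΛconic _ (hA (φ n)) _ (inv_pos.2 hn)
      have hlim : Tendsto (fun n => (x (φ n), ‖ξ (φ n)‖⁻¹ • ξ (φ n))) atTop
          (𝓝 (((0 : EuclideanSpace ℝ (Fin d)), a), z)) :=
        (hx.comp hφ.tendsto_atTop).prodMk_nhds hz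
      have hzΛ := hΛclosed ⟨mem_closure_of_tendsto hlim hmem, haX⟩
      have hz2 : z.2 = 0 := by
        have h1 : Tendsto (fun n => ‖ξ (φ n)‖⁻¹ • (ξ (φ n)).2) atTop (𝓝 z.2) :=
          (continuous_snd.tendsto _).comp hz
        have h2 : Tendsto (fun n => ‖ξ (φ n)‖⁻¹ • (ξ (φ n)).2) atTop (𝓝 ((0 : ℝ) • b)) :=
          (tendsto_inv_atTop_zero.comp (ht.comp hφ.tendsto_atTop)).smul
            (hs2.comp hφ.tendsto_atTop)
        rw [zero_smul] at h2
        exact tendsto_nhds_unique h1 h2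
      have hz0 : z = 0 := hnc _ ⟨hzΛ, rfl, haX, hz2⟩
      have hn1 : Tendsto (fun n => ‖‖ξ (φ n)‖⁻¹ • ξ (φ n)‖) atTop (𝓝 ‖z‖) := hz.norm
      have hn2 : Tendsto (fun n => ‖‖ξ (φ n)‖⁻¹ • ξ (φ n)‖) atTop (𝓝 (1 : ℝ)) := by
        refine tendsto_const_nhds.congr' ?_
        filter_upwards [hpos] with n hn
        rw [norm_smul, norm_inv, norm_norm, inv_mul_cancel₀ hn.ne']
      have := tendsto_nhds_unique hn1 hn2
      rw [hz0, norm_zero] at this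
      exact zero_ne_one this
    · rw [tendsto_atTop] at ht
      push Not at ht
      obtain ⟨r, hr⟩ := ht
      have hr' : ∃ᶠ n in atTop, ξ n ∈ Metric.closedBall (0 : Pt d e) r :=
        hr.mono fun n hn => by
          rw [mem_closedBall_zero_iff]
          exact hn.le
      obtain ⟨z, -, φ, hφ, hz⟩ :=
        tendsto_subseq_of_frequently_bounded Metric.isBounded_closedBall hr'
      have hlim : Tendsto (fun n => (x (φ n), ξ (φ n))) atTop
          (𝓝 (((0 : EuclideanSpace ℝ (Fin d)), a), z)) :=
        (hx.comp hφ.tendsto_atTop).prodMk_nhds hz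
      have hzΛ := hΛclosed
        ⟨mem_closure_of_tendsto hlim (Eventually.of_forall fun n => hA (φ n)), haX⟩
      have hz2 : z.2 = b :=
        tendsto_nhds_unique ((continuous_snd.tendsto _).comp hz) (hs2.comp hφ.tendsto_atTop)
      refine ⟨z.1, ?_⟩
      rw [← hz2]
      exact hzΛ
  · rintro ⟨haX, ξ', h⟩
    refine ⟨haX, ξ', haX, fun _ => (0, a), fun _ => (ξ', b), fun _ => (0, a), fun _ => 0,
      fun _ => h, fun _ => ⟨rfl, haX, rfl⟩, tendsto_const_nhds, tendsto_const_nhds, ?_, ?_⟩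
    · simp
    · simp
end

section
/- Let γ ⊆ ℝⁿ be a closed convex cone with vertex at 0, and let ξ₀ ∈ ℝⁿ satisfy ⟨v, ξ₀⟩ < 0 for every v ∈ γ \ {0}. Let U ⊆ ℝⁿ be open and x₀ ∈ U. Then there exist an open neighborhood W of x₀ and ε > 0 such that the closure of (W + γ) ∩ {y ∈ ℝⁿ : ⟨y − x₀, ξ₀⟩ > −ε} is compact and contained in U. -/
open RealInnerProductSpace

/-- Let `γ ⊆ ℝⁿ` be a closed convex cone with vertex at `0` and let `ξ₀` satisfy
`⟪v, ξ₀⟫ < 0` for every `v ∈ γ \ {0}`.  Let `U` be open and `x₀ ∈ U`.  Then there exist an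
open neighborhood `W` of `x₀` and `ε > 0` such that the closure of
`(W + γ) ∩ {y : ⟪y - x₀, ξ₀⟫ > -ε}` is compact and contained in `U`. -/
theorem stmt10 {n : ℕ}
    (γ : Set (EuclideanSpace ℝ (Fin n)))
    (hγclosed : IsClosed γ)
    (hγconv : Convex ℝ γ)
    (hγcone : ∀ v ∈ γ, ∀ t : ℝ, 0 ≤ t → t • v ∈ γ)
    (ξ₀ : EuclideanSpace ℝ (Fin n))
    (hξ₀ : ∀ v ∈ γ, v ≠ 0 → ⟪v, ξ₀⟫ < 0)
    (U : Set (EuclideanSpace ℝ (Fin n))) (hU : IsOpen U)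
    (x₀ : EuclideanSpace ℝ (Fin n)) (hx₀ : x₀ ∈ U) :
    ∃ (W : Set (EuclideanSpace ℝ (Fin n))) (ε : ℝ),
      IsOpen W ∧ x₀ ∈ W ∧ 0 < ε ∧
      IsCompact (closure
        ({y : EuclideanSpace ℝ (Fin n) | ∃ w ∈ W, ∃ v ∈ γ, y = w + v} ∩
          {y : EuclideanSpace ℝ (Fin n) | -ε < ⟪y - x₀, ξ₀⟫})) ∧
      closure
        ({y : EuclideanSpace ℝ (Fin n) | ∃ w ∈ W, ∃ v ∈ γ, y = w + v} ∩
          {y : EuclideanSpace ℝ (Fin n) | -ε < ⟪y - x₀, ξ₀⟫}) ⊆ U := by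
  have key : ∃ c : ℝ, 0 < c ∧ ∀ v ∈ γ, c * ‖v‖ ≤ -⟪v, ξ₀⟫ := by
    have hK : IsCompact (Metric.sphere (0 : EuclideanSpace ℝ (Fin n)) 1 ∩ γ) :=
      (isCompact_sphere _ _).inter_right hγclosed
    have hunit : ∀ v ∈ γ, v ≠ 0 →
        ‖v‖⁻¹ • v ∈ Metric.sphere (0 : EuclideanSpace ℝ (Fin n)) 1 ∩ γ := by
      intro v hv h0
      refine ⟨?_, hγcone v hv _ (by positivity)⟩
      have : ‖v‖ ≠ 0 := norm_ne_zero_iff.mpr h0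
      simp [norm_smul, this]
    rcases (Metric.sphere (0 : EuclideanSpace ℝ (Fin n)) 1 ∩ γ).eq_empty_or_nonempty with he | hne
    · refine ⟨1, one_pos, fun v hv => ?_⟩
      by_cases h0 : v = 0
      · simp [h0]
      · have := hunit v hv h0
        rw [he] at this
        exact this.elim
    · obtain ⟨u, hu, hmin⟩ := hK.exists_isMinOn hne
        (f := fun v => -⟪v, ξ₀⟫) (by fun_prop)
      have hu0 : u ≠ 0 := by
        rintro rfl
        simpa using hu.1
      refine ⟨-⟪u, ξ₀⟫, by linarith [hξ₀ u hu.2 hu0], fun v hv => ?_⟩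
      by_cases h0 : v = 0
      · simp [h0]
      · have h1 : -⟪u, ξ₀⟫ ≤ -⟪‖v‖⁻¹ • v, ξ₀⟫ := hmin (hunit v hv h0)
        have hp : 0 < ‖v‖ := norm_pos_iff.mpr h0
        rw [real_inner_smul_left] at h1
        calc -⟪u, ξ₀⟫ * ‖v‖ ≤ -(‖v‖⁻¹ * ⟪v, ξ₀⟫) * ‖v‖ :=
              mul_le_mul_of_nonneg_right h1 hp.le
          _ = -⟪v, ξ₀⟫ := by field_simp
  obtain ⟨c, hc, hcv⟩ := key
  obtain ⟨r, hr, hrU⟩ := Metric.nhds_basis_closedBall.mem_iff.mp (hU.mem_nhds hx₀)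
  have hD : 0 < ‖ξ₀‖ + 1 + c := by positivity
  obtain ⟨δ, hδ⟩ : ∃ δ : ℝ, δ = c * r / 4 / (‖ξ₀‖ + 1 + c) := ⟨_, rfl⟩
  have hδ0 : 0 < δ := by rw [hδ]; positivity
  have hδ1 : δ * (‖ξ₀‖ + 1 + c) = c * r / 4 := by rw [hδ]; field_simp
  have hδξ : 0 ≤ δ * ‖ξ₀‖ := by positivity
  have hδc : 0 < δ * c := by positivity
  have hsub : closure
        ({y : EuclideanSpace ℝ (Fin n) | ∃ w ∈ Metric.ball x₀ δ, ∃ v ∈ γ, y = w + v} ∩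
          {y : EuclideanSpace ℝ (Fin n) | -(c * r / 4) < ⟪y - x₀, ξ₀⟫}) ⊆
        Metric.closedBall x₀ r := by
    refine closure_minimal ?_ Metric.isClosed_closedBall
    rintro y ⟨⟨w, hw, v, hv, rfl⟩, hy⟩
    simp only [Set.mem_setOf_eq] at hy
    rw [mem_ball_iff_norm] at hw
    rw [mem_closedBall_iff_norm]
    have e : w + v - x₀ = (w - x₀) + v := by abel
    rw [e, inner_add_left] at hy
    rw [e]
    have h1 := hcv v hv
    have h2 := real_inner_le_norm (w - x₀) ξ₀
    have h3 : ‖w - x₀‖ * ‖ξ₀‖ ≤ δ * ‖ξ₀‖ :=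
      mul_le_mul_of_nonneg_right hw.le (norm_nonneg _)
    have h4 : ‖v‖ ≤ r / 2 := by
      refine le_of_mul_le_mul_left ?_ hc
      linarith
    have h5 : δ ≤ r / 4 := by
      refine le_of_mul_le_mul_left ?_ hc
      linarith
    linarith [norm_add_le (w - x₀) v]
  exact ⟨Metric.ball x₀ δ, c * r / 4, Metric.isOpen_ball, Metric.mem_ball_self hδ0,
    by positivity, (isCompact_closedBall x₀ r).of_isClosed_subset isClosed_closure hsub,
    hsub.trans hrU⟩
end
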